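/- Let w ∈ Max be such that the set of extreme points of DF(w) is infinite. Then w is not eventually periodic (there are no m ≥ 0 and p ≥ 1 with w_{r+p} = w_r for all r ≥ m), and DF is injective at w: for every w' ∈ Max with DF(w') = DF(w), one has w' = w. -/

import Mathlib

open Filter Topology MeasureTheory

/-- The sequence space `Σ⁺ = {0,1,2}^ℕ` (with the product topology). -/
abbrev Seq3 := ℕ → Fin 3

/-- The shift map `σ`. -/
def shift (s : Seq3) : Seq3 := fun n => s (n + 1)

/-- The observable `κ(s) = e_{s₀}`. -/
noncomputable def kappa (s : Seq3) : Fin 3 → ℝ := fun i => if i = s 0 then 1 else 0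

/-- The cocycle `κ_σ(s,r) = Σ_{i<r} κ(σⁱ s)`. -/
noncomputable def birk (s : Seq3) (r : ℕ) : Fin 3 → ℝ :=
  ∑ i ∈ Finset.range r, kappa (shift^[i] s)

/-- The Birkhoff digit frequency of `s` exists and equals `v`. -/
def hasFreq (s : Seq3) (v : Fin 3 → ℝ) : Prop :=
  Tendsto (fun r : ℕ => (r : ℝ)⁻¹ • birk s r) atTop (nhds v)

/-- The lexicographic order on `Σ⁺`. -/
def lexLe (s t : Seq3) : Prop :=
  s = t ∨ ∃ n, (∀ i, i < n → s i = t i) ∧ s n < t n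

/-- The set `Max` of maximal sequences. -/
def MaxSet : Set Seq3 := {w | w 0 = 2 ∧ ∀ r : ℕ, lexLe (shift^[r] w) w}

/-- The symbolic β-shift `B(w)`. -/
def BetaShift (w : Seq3) : Set Seq3 := {s | ∀ r : ℕ, lexLe (shift^[r] s) w}

/-- The digit frequency set `DF(w)`. -/
def DF (w : Seq3) : Set (Fin 3 → ℝ) := {v | ∃ s ∈ BetaShift w, hasFreq s v}

/-- The Misiurewicz–Ziemian digit frequency set `DF_MZ(X)` of a subset `X ⊆ Σ⁺`. -/
def DFMZ (X : Set Seq3) : Set (Fin 3 → ℝ) :=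
  {v | ∃ (s : ℕ → Seq3) (r : ℕ → ℕ), (∀ i, s i ∈ X) ∧ Tendsto r atTop atTop ∧
    Tendsto (fun i => (r i : ℝ)⁻¹ • birk (s i) (r i)) atTop (nhds v)}

/-- The standard 2-simplex `Δ ⊆ ℝ³`. -/
def Delta : Set (Fin 3 → ℝ) := {α | (∀ i, 0 ≤ α i) ∧ α 0 + α 1 + α 2 = 1}

/-- `Δ' = {α ∈ Δ : α₂ > 0}`. -/
def Delta' : Set (Fin 3 → ℝ) := {α | α ∈ Delta ∧ 0 < α 2}

/-- `I` is the infimax sequence of `α`: the infimum, in the lexicographic order, of the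
(nonempty) set of maximal sequences with digit frequency `α`; it belongs to `Max`. -/
def IsInfimax (α : Fin 3 → ℝ) (I : Seq3) : Prop :=
  {w | w ∈ MaxSet ∧ hasFreq w α}.Nonempty ∧ I ∈ MaxSet ∧
    (∀ w, w ∈ MaxSet ∧ hasFreq w α → lexLe I w) ∧
    (∀ b : Seq3, (∀ w, w ∈ MaxSet ∧ hasFreq w α → lexLe b w) → lexLe b I)

/-- The closure of the forward `σ`-orbit of `s` (e.g. `C_α` is `orbitClosure I(α)`). -/
def orbitClosure (s : Seq3) : Set Seq3 := closure {t | ∃ r : ℕ, shift^[r] s = t}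

/-- A vector in `ℝ³` is rational if all its coordinates are. -/
def IsRat (v : Fin 3 → ℝ) : Prop := ∀ i, ∃ q : ℚ, v i = (q : ℝ)

/-- A minimal set of a continuous map: a nonempty compact invariant set in which every
point has dense forward orbit. -/
def IsMinimalSet {X : Type*} [TopologicalSpace X] (f : X → X) (C : Set X) : Prop :=
  C.Nonempty ∧ IsCompact C ∧ Set.MapsTo f C C ∧
    ∀ x ∈ C, C ⊆ closure {y | ∃ n : ℕ, f^[n] x = y}

/-!
For `w ∈ Max`, a sequence lies in `B(w)` iff it is a concatenation of *descent words*
`w₀ … w_{k-1} a` with `a < w_k`, possibly followed by a tail `w`.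

If `w` has period `p` from index `m` on, the extreme points of `DF(w)` are among the frequency `c`
of the period and the frequencies of the finitely many descent words with `k < m + p`.
* Every convex combination `x` of frequencies of descent words of bounded length is in `DF(w)`:
  choosing each new word so that its deviation from `x` makes an obtuse angle with the accumulated
  deviation keeps the latter of size `O(√n)`.
* A linear functional that is less than `u` at `c` and at these finitely many frequencies is at most
  `u` on `DF(w)`: a longer descent word arises from a shorter one by inserting periods.

If `w' < w` first differ at index `n`, then the truncation `v = w₀ … w_n 0 0 0 …` is maximal and
`w' ≤ v ≤ w`. So `DF(w') = DF(w)` would equal `DF(v)`, which has finitely many extreme points as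
`v` is eventually periodic.
-/

open Function Set

section Lex

theorem lexLe_iff_toLex_le {s t : Seq3} : lexLe s t ↔ toLex s ≤ toLex t := .rfl

theorem shift_iterate_apply (r : ℕ) (s : Seq3) (n : ℕ) : (shift^[r] s) n = s (r + n) := by
  induction r generalizing s with
  | zero => rw [zero_add, iterate_zero_apply]
  | succ r ih => rw [iterate_succ_apply, ih, shift, add_right_comm]

theorem shift_iterate_mem_BetaShift {s w : Seq3} (hs : s ∈ BetaShift w) (r : ℕ) :
    shift^[r] s ∈ BetaShift w := fun j => by
  rw [← iterate_add_apply]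
  exact hs (j + r)

theorem DF_mono {w w' : Seq3} (h : toLex w ≤ toLex w') : DF w ⊆ DF w' :=
  fun _ ⟨s, hs, hv⟩ => ⟨s, fun r => (lexLe_iff_toLex_le.1 (hs r)).trans h, hv⟩

/-- The sequence `s₀ … s_{n-1} 0 0 0 …`. -/
def truncate (n : ℕ) (s : Seq3) : Seq3 := fun i => if i < n then s i else 0

theorem truncate_apply_of_lt {n i : ℕ} (h : i < n) (s : Seq3) : truncate n s i = s i := if_pos h

theorem truncate_apply_of_le {n i : ℕ} (h : n ≤ i) (s : Seq3) : truncate n s i = 0 :=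
  if_neg h.not_gt

theorem truncate_le_self (n : ℕ) (s : Seq3) : truncate n s ≤ s := fun i => by
  rcases lt_or_ge i n with h | h
  · exact (truncate_apply_of_lt h s).le
  · exact (truncate_apply_of_le h s).trans_le (Fin.zero_le _)

theorem truncate_mono_left (s : Seq3) {k n : ℕ} (hkn : k ≤ n) : truncate k s ≤ truncate n s :=
  fun i => by
  rcases lt_or_ge i k with h | h
  · rw [truncate_apply_of_lt h, truncate_apply_of_lt (h.trans_le hkn)]
  · exact (truncate_apply_of_le h s).trans_le (Fin.zero_le _)

theorem shift_iterate_truncate (r n : ℕ) (s : Seq3) :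
    shift^[r] (truncate n s) = truncate (n - r) (shift^[r] s) := by
  funext i
  simp only [truncate, shift_iterate_apply, lt_tsub_iff_left]

theorem toLex_truncate_mono {s t : Seq3} (n : ℕ) (h : toLex s ≤ toLex t) :
    toLex (truncate n s) ≤ toLex (truncate n t) := by
  rcases h.eq_or_lt with heq | ⟨k, hk, hlt⟩
  · rw [toLex.injective heq]
  rcases lt_or_ge k n with hkn | hnk
  · refine le_of_lt ⟨k, fun i hi => ?_, ?_⟩
    · simpa only [Pi.toLex_apply, truncate_apply_of_lt (hi.trans hkn)] using hk i hi
    · simpa only [Pi.toLex_apply, truncate_apply_of_lt hkn] using hlt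
  · refine le_of_eq (congrArg toLex (funext fun i => ?_))
    rcases lt_or_ge i n with hi | hi
    · simpa only [Pi.toLex_apply, truncate_apply_of_lt hi] using hk i (hi.trans_le hnk)
    · rw [truncate_apply_of_le hi, truncate_apply_of_le hi]

theorem truncate_mem_BetaShift {w : Seq3} (hw : w ∈ BetaShift w) (n : ℕ) :
    truncate n w ∈ BetaShift (truncate n w) := fun r => by
  rw [lexLe_iff_toLex_le, shift_iterate_truncate]
  calc toLex (truncate (n - r) (shift^[r] w))
      ≤ toLex (truncate n (shift^[r] w)) :=
        Pi.toLex_monotone (truncate_mono_left _ (Nat.sub_le n r))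
    _ ≤ toLex (truncate n w) := toLex_truncate_mono n (hw r)

theorem exists_toLex_le_truncate {s t : Seq3} (h : toLex s < toLex t) :
    ∃ n, toLex s ≤ toLex (truncate n t) := by
  obtain ⟨k, hk, hlt⟩ := h
  refine ⟨k + 1, le_of_lt ⟨k, fun i hi => ?_, ?_⟩⟩
  · exact (hk i hi).trans (truncate_apply_of_lt (hi.trans k.lt_succ_self) t).symm
  · exact hlt.trans_eq (truncate_apply_of_lt k.lt_succ_self t).symm

end Lex

section Frequency

theorem birk_eq_sum_single (s : Seq3) (n : ℕ) :
    birk s n = ∑ i ∈ Finset.range n, Pi.single (s i) 1 := by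
  refine Finset.sum_congr rfl fun i _ => funext fun j => ?_
  rw [kappa, shift_iterate_apply, add_zero, Pi.single_apply]

theorem sum_map_single {F M : Type*} [AddCommMonoid M] [FunLike F (Fin 3 → ℝ) M]
    [AddMonoidHomClass F (Fin 3 → ℝ) M] (f : F) (s : Seq3) (n : ℕ) :
    ∑ i ∈ Finset.range n, f (Pi.single (s i) 1) = f (birk s n) := by
  rw [birk_eq_sum_single, map_sum]

theorem hasFreq_of_isLittleO {s : Seq3} {v : Fin 3 → ℝ}
    (h : (fun n => birk s n - (n : ℝ) • v) =o[atTop] fun n : ℕ => (n : ℝ)) : hasFreq s v := by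
  have hlim := h.tendsto_inv_smul_nhds_zero.add_const v
  rw [zero_add] at hlim
  refine hlim.congr' ?_
  filter_upwards [eventually_ne_atTop 0] with n hn
  rw [smul_sub, inv_smul_smul₀ (Nat.cast_ne_zero.2 hn), sub_add_cancel]

theorem hasFreq_of_sum_toLp_isLittleO {s : Seq3} {v : Fin 3 → ℝ}
    (h : (fun n => ∑ i ∈ Finset.range n, WithLp.toLp 2 (Pi.single (s i) 1 - v)) =o[atTop]
      fun n : ℕ => (n : ℝ)) : hasFreq s v := by
  let ofLp := (PiLp.continuousLinearEquiv 2 ℝ fun _ : Fin 3 => ℝ).toContinuousLinearMap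
  refine hasFreq_of_isLittleO (((ofLp.isBigO_comp _ _).trans_isLittleO h).congr_left fun n => ?_)
  rw [map_sum]
  change ∑ i ∈ Finset.range n, (Pi.single (s i) 1 - v) = birk s n - (n : ℝ) • v
  rw [Finset.sum_sub_distrib, ← birk_eq_sum_single, Finset.sum_const, Finset.card_range,
    Nat.cast_smul_eq_nsmul]

theorem apply_le_of_hasFreq {s : Seq3} {v : Fin 3 → ℝ} (hv : hasFreq s v)
    (f : (Fin 3 → ℝ) →L[ℝ] ℝ) {u C : ℝ}
    (hC : ∀ n, ∑ i ∈ Finset.range n, (f (Pi.single (s i) 1) - u) ≤ C) : f v ≤ u := by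
  have hlim : Tendsto (fun n : ℕ => u + C * (n : ℝ)⁻¹) atTop (𝓝 u) := by
    simpa using ((tendsto_inv_atTop_nhds_zero_nat (𝕜 := ℝ)).const_mul C).const_add u
  refine le_of_tendsto_of_tendsto ((f.continuous.tendsto v).comp hv) hlim ?_
  filter_upwards [eventually_gt_atTop 0] with n hn
  have hn' : (0 : ℝ) < n := Nat.cast_pos.2 hn
  have hsum : f (birk s n) - n * u ≤ C := by
    simpa [Finset.sum_sub_distrib, sum_map_single f] using hC n
  rw [comp_apply, map_smul, smul_eq_mul]
  field_simp
  linarith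

end Frequency

section EventuallyPeriodic

theorem sum_range_add_of_eventually_periodic {M : Type*} [AddCommMonoid M] {f : ℕ → M} {m p : ℕ}
    (hper : ∀ r, m ≤ r → f (r + p) = f r) {r : ℕ} (hr : m ≤ r) :
    ∑ i ∈ Finset.range (r + p), f i =
      ∑ i ∈ Finset.range r, f i + ∑ i ∈ Finset.Ico m (m + p), f i := by
  induction r, hr using Nat.le_induction with
  | base => exact (Finset.sum_range_add_sum_Ico f (Nat.le_add_right m p)).symm
  | succ r hr ih =>
    rw [add_right_comm, Finset.sum_range_succ, ih, hper r hr, Finset.sum_range_succ,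
      add_right_comm]

theorem bddAbove_range_of_add_le {α : Type*} [Preorder α] [IsDirectedOrder α] [Nonempty α]
    {D : ℕ → α} {m p : ℕ} (hp : 0 < p) (hD : ∀ r, m ≤ r → D (r + p) ≤ D r) :
    BddAbove (range D) := by
  obtain ⟨C, hC⟩ := ((finite_Iio (m + p)).image D).bddAbove
  refine ⟨C, forall_mem_range.2 fun r => ?_⟩
  induction r using Nat.strong_induction_on with
  | _ r ih =>
    rcases lt_or_ge r (m + p) with hr | hr
    · exact hC (mem_image_of_mem D hr)
    · obtain ⟨k, rfl⟩ := Nat.exists_eq_add_of_le' (le_of_add_le_right hr)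
      exact (hD k (by lia)).trans (ih k (by lia))

variable {w : Seq3} {m p : ℕ}

/-- The digit frequency of the word `w_m … w_{m+p-1}`; it is the digit frequency of `w` when
`w` has period `p` from index `m` on. -/
noncomputable def periodFreq (w : Seq3) (m p : ℕ) : Fin 3 → ℝ :=
  (p : ℝ)⁻¹ • ∑ i ∈ Finset.Ico m (m + p), Pi.single (w i) 1

theorem smul_periodFreq (w : Seq3) (m : ℕ) (hp : 0 < p) :
    (p : ℝ) • periodFreq w m p = ∑ i ∈ Finset.Ico m (m + p), Pi.single (w i) 1 :=
  smul_inv_smul₀ (Nat.cast_ne_zero.2 hp.ne') _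

theorem sum_Ico_map_single_sub (f : (Fin 3 → ℝ) →ₗ[ℝ] ℝ) (w : Seq3) (m : ℕ) (hp : 0 < p) (c : ℝ) :
    ∑ i ∈ Finset.Ico m (m + p), (f (Pi.single (w i) 1) - c) = p * (f (periodFreq w m p) - c) := by
  rw [Finset.sum_sub_distrib, ← map_sum, ← smul_periodFreq w m hp, map_smul, Finset.sum_const,
    Nat.card_Ico, Nat.add_sub_cancel_left, nsmul_eq_mul, smul_eq_mul, mul_sub]

theorem hasFreq_periodFreq (hp : 0 < p) (hper : ∀ r, m ≤ r → w (r + p) = w r) :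
    hasFreq w (periodFreq w m p) := by
  set d : ℕ → Fin 3 → ℝ := fun n => birk w n - (n : ℝ) • periodFreq w m p with hd
  have hd_per : ∀ r, m ≤ r → d (r + p) = d r := fun r hr => by
    have hsum := sum_range_add_of_eventually_periodic
      (f := fun i => (Pi.single (w i) 1 : Fin 3 → ℝ)) (fun i hi => by rw [hper i hi]) hr
    simp only [hd]
    rw [birk_eq_sum_single, hsum, ← birk_eq_sum_single, Nat.cast_add, add_smul,
      smul_periodFreq w m hp, add_sub_add_right_eq_sub]
  obtain ⟨C, hC⟩ := bddAbove_range_of_add_le (D := fun n => ‖d n‖) hp fun r hr => by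
    rw [hd_per r hr]
  have hbounded : d =O[atTop] fun _ : ℕ => (1 : ℝ) :=
    .of_bound C (.of_forall fun n => by simpa using hC (mem_range_self n))
  exact hasFreq_of_isLittleO <| hbounded.trans_isLittleO <|
    (Asymptotics.isLittleO_const_id_atTop (1 : ℝ)).comp_tendsto tendsto_natCast_atTop_atTop

end EventuallyPeriodic

section Concatenation

variable {α : Type*}

/-- In the concatenation of words of lengths `len 0 + 1, len 1 + 1, …`, the `n`-th letter is the
`(blockCursor len n).2`-th letter of the `(blockCursor len n).1`-th word. Lengths are shifted by one
so that no word is empty. -/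
def blockCursor (len : ℕ → ℕ) : ℕ → ℕ × ℕ
  | 0 => (0, 0)
  | n + 1 =>
    let c := blockCursor len n
    if c.2 < len c.1 then (c.1, c.2 + 1) else (c.1 + 1, 0)

/-- The concatenation of the words `b j 0 … b j (len j)`, `j = 0, 1, …`. -/
def blockConcat (b : ℕ → ℕ → α) (len : ℕ → ℕ) (n : ℕ) : α :=
  b (blockCursor len n).1 (blockCursor len n).2

theorem blockCursor_succ_of_lt {len : ℕ → ℕ} {n : ℕ}
    (h : (blockCursor len n).2 < len (blockCursor len n).1) :
    blockCursor len (n + 1) = ((blockCursor len n).1, (blockCursor len n).2 + 1) :=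
  if_pos h

theorem blockCursor_succ_of_le {len : ℕ → ℕ} {n : ℕ}
    (h : len (blockCursor len n).1 ≤ (blockCursor len n).2) :
    blockCursor len (n + 1) = ((blockCursor len n).1 + 1, 0) :=
  if_neg h.not_gt

theorem blockCursor_snd_le (len : ℕ → ℕ) (n : ℕ) :
    (blockCursor len n).2 ≤ len (blockCursor len n).1 := by
  cases n with
  | zero => exact Nat.zero_le _
  | succ n =>
    rcases lt_or_ge (blockCursor len n).2 (len (blockCursor len n).1) with h | h
    · rw [blockCursor_succ_of_lt h]
      exact h
    · rw [blockCursor_succ_of_le h]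
      exact Nat.zero_le _

theorem blockCursor_fst_le (len : ℕ → ℕ) (n : ℕ) : (blockCursor len n).1 ≤ n := by
  induction n with
  | zero => exact le_rfl
  | succ n ih =>
    rcases lt_or_ge (blockCursor len n).2 (len (blockCursor len n).1) with h | h
    · rw [blockCursor_succ_of_lt h]
      exact ih.trans n.le_succ
    · rw [blockCursor_succ_of_le h]
      exact Nat.succ_le_succ ih

theorem blockCursor_add {len : ℕ → ℕ} {n l : ℕ}
    (h : (blockCursor len n).2 + l ≤ len (blockCursor len n).1) :
    blockCursor len (n + l) = ((blockCursor len n).1, (blockCursor len n).2 + l) := by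
  induction l with
  | zero => rfl
  | succ l ih =>
    have hl := ih (by lia)
    rw [← add_assoc, blockCursor_succ_of_lt (by rw [hl]; exact h), hl, ← add_assoc]

theorem sum_range_blockConcat {M : Type*} [AddCommMonoid M] (g : α → M) (b : ℕ → ℕ → α)
    (len : ℕ → ℕ) (n : ℕ) :
    ∑ k ∈ Finset.range n, g (blockConcat b len k) =
      ∑ j ∈ Finset.range (blockCursor len n).1, ∑ l ∈ Finset.range (len j + 1), g (b j l) +
        ∑ l ∈ Finset.range (blockCursor len n).2, g (b (blockCursor len n).1 l) := by
  induction n with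
  | zero => simp [blockCursor]
  | succ n ih =>
    rw [Finset.sum_range_succ, ih, blockConcat]
    rcases (blockCursor_snd_le len n).lt_or_eq with h | h
    · rw [blockCursor_succ_of_lt h, add_assoc, ← Finset.sum_range_succ]
    · rw [blockCursor_succ_of_le h.ge, Finset.sum_range_succ _ (blockCursor len n).1, ← h,
        Finset.sum_range_succ, Finset.sum_range_zero, add_zero, add_assoc]

end Concatenation

section Steering

variable {E : Type*} [NormedAddCommGroup E] [InnerProductSpace ℝ E]

theorem norm_add_sq_le_of_inner_nonpos {e v : E} (h : inner ℝ e v ≤ 0) :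
    ‖e + v‖ ^ 2 ≤ ‖e‖ ^ 2 + ‖v‖ ^ 2 := by
  rw [norm_add_sq_real]
  linarith

-- Always adding a vector that makes an obtuse angle with the current sum increases the squared
-- norm by at most `C ^ 2` per step.
theorem exists_seq_norm_sum_le_mul_sqrt {ι : Type*} {v : ι → E} {C : ℝ} (hC : ∀ i, ‖v i‖ ≤ C)
    (hv : ∀ e, ∃ i, inner ℝ e (v i) ≤ 0) :
    ∃ q : ℕ → ι, ∀ n, ‖∑ j ∈ Finset.range n, v (q j)‖ ≤ C * √n := by
  choose next hnext using hv
  let S : ℕ → E := fun n => (fun e => e + v (next e))^[n] 0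
  have hS_succ : ∀ n, S (n + 1) = S n + v (next (S n)) := fun n => iterate_succ_apply' _ n 0
  have hS : ∀ n, ∑ j ∈ Finset.range n, v (next (S j)) = S n := fun n => by
    simpa [hS_succ, S] using Finset.sum_range_sub S n
  have hC₀ : 0 ≤ C := (norm_nonneg _).trans (hC (next 0))
  have hsq : ∀ n : ℕ, ‖S n‖ ^ 2 ≤ C ^ 2 * n := fun n => by
    induction n with
    | zero => simp [S]
    | succ n ih =>
      calc ‖S (n + 1)‖ ^ 2 ≤ ‖S n‖ ^ 2 + ‖v (next (S n))‖ ^ 2 :=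
            hS_succ n ▸ norm_add_sq_le_of_inner_nonpos (hnext (S n))
        _ ≤ C ^ 2 * n + C ^ 2 := by gcongr; exact hC _
        _ = C ^ 2 * (n + 1 : ℕ) := by push_cast; ring
  refine ⟨fun n => next (S n), fun n => ?_⟩
  rw [hS, ← Real.sqrt_sq hC₀, ← Real.sqrt_mul (sq_nonneg C)]
  exact Real.le_sqrt_of_sq_le (hsq n)

theorem sqrt_natCast_isLittleO : (fun n : ℕ => √(n : ℝ)) =o[atTop] fun n : ℕ => (n : ℝ) := by
  have hsqrt : Tendsto (fun n : ℕ => √(n : ℝ)) atTop atTop :=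
    Real.tendsto_sqrt_atTop.comp tendsto_natCast_atTop_atTop
  have hone := ((Asymptotics.isLittleO_const_id_atTop (1 : ℝ)).comp_tendsto hsqrt).mul_isBigO
    (Asymptotics.isBigO_refl (fun n : ℕ => √(n : ℝ)) atTop)
  simpa [comp_def] using hone

theorem exists_blockConcat_sum_isLittleO {α ι : Type*} {g : α → E}
    (hg : Bornology.IsBounded (range g)) {word : ι → ℕ → α} {len : ι → ℕ} {N : ℕ}
    (hlen : ∀ i, len i < N)
    (hword : ∀ e, ∃ i, inner ℝ e (∑ l ∈ Finset.range (len i + 1), g (word i l)) ≤ 0) :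
    ∃ q : ℕ → ι, (fun n => ∑ k ∈ Finset.range n,
        g (blockConcat (fun j => word (q j)) (fun j => len (q j)) k)) =o[atTop]
      fun n : ℕ => (n : ℝ) := by
  obtain ⟨M, hM₀, hM⟩ := hg.exists_pos_norm_le
  have hsum : ∀ i, ∀ n ≤ N, ‖∑ l ∈ Finset.range n, g (word i l)‖ ≤ N * M := fun i n hn => by
    calc ‖∑ l ∈ Finset.range n, g (word i l)‖ ≤ ∑ _l ∈ Finset.range n, M :=
          norm_sum_le_of_le _ fun l _ => hM _ (mem_range_self _)
      _ = n * M := by rw [Finset.sum_const, Finset.card_range, nsmul_eq_mul]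
      _ ≤ N * M := by gcongr
  obtain ⟨q, hq⟩ := exists_seq_norm_sum_le_mul_sqrt (fun i => hsum i (len i + 1) (hlen i)) hword
  refine ⟨q, Asymptotics.IsBigO.trans_isLittleO (.of_bound (2 * (N * M)) ?_)
    sqrt_natCast_isLittleO⟩
  filter_upwards [eventually_ge_atTop 1] with n hn
  set c := blockCursor (fun j => len (q j)) n
  have hsqrt : 1 ≤ √(n : ℝ) := Real.one_le_sqrt.2 (Nat.one_le_cast.2 hn)
  have hblocks : (N * M) * √(c.1 : ℝ) ≤ (N * M) * √n := by
    gcongr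
    exact blockCursor_fst_le _ n
  have hrest := hsum (q c.1) c.2 ((blockCursor_snd_le _ n).trans (hlen _).le)
  rw [sum_range_blockConcat, Real.norm_of_nonneg (Real.sqrt_nonneg n)]
  calc _ ≤ (N * M) * √(c.1 : ℝ) + N * M := norm_add_le_of_le (hq c.1) hrest
    _ ≤ (N * M) * √n + (N * M) * √n :=
        add_le_add hblocks (le_mul_of_one_le_right (by positivity) hsqrt)
    _ = 2 * (N * M) * √n := by ring

end Steering

section Descents

variable {w : Seq3}

/-- The pairs `(k, a)` with `k < N` and `a < w_k`. Such a pair stands for the descent word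
`w₀ … w_{k-1} a`, the initial segment of length `k + 1` of `Function.update w k a`; the sequences
in `BetaShift w` are built from these words. -/
def descents (w : Seq3) (N : ℕ) : Set (ℕ × Fin 3) := {q | q.1 < N ∧ q.2 < w q.1}

/-- The digit frequency of the word `w₀ … w_{k-1} a`, where `q = (k, a)`. -/
noncomputable def descentFreq (w : Seq3) (q : ℕ × Fin 3) : Fin 3 → ℝ :=
  ((q.1 + 1 : ℕ) : ℝ)⁻¹ • birk (update w q.1 q.2) (q.1 + 1)

theorem finite_descents (w : Seq3) (N : ℕ) : (descents w N).Finite :=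
  ((finite_Iio N).prod finite_univ).subset fun _ hq => ⟨hq.1, mem_univ _⟩

theorem smul_descentFreq (w : Seq3) (q : ℕ × Fin 3) :
    ((q.1 + 1 : ℕ) : ℝ) • descentFreq w q = birk (update w q.1 q.2) (q.1 + 1) :=
  smul_inv_smul₀ (Nat.cast_ne_zero.2 q.1.succ_ne_zero) _

theorem sum_update_map_single_sub (f : (Fin 3 → ℝ) →ₗ[ℝ] ℝ) (w : Seq3) (q : ℕ × Fin 3) (c : ℝ) :
    ∑ l ∈ Finset.range (q.1 + 1), (f (Pi.single (update w q.1 q.2 l) 1) - c) =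
      (q.1 + 1 : ℕ) * (f (descentFreq w q) - c) := by
  rw [Finset.sum_sub_distrib, sum_map_single, ← smul_descentFreq, map_smul, Finset.sum_const,
    Finset.card_range, nsmul_eq_mul, smul_eq_mul, mul_sub]

theorem sum_range_update {α M : Type*} [AddCommMonoid M] (g : α → M) (w : ℕ → α) (k : ℕ)
    (a : α) :
    ∑ i ∈ Finset.range (k + 1), g (update w k a i) = ∑ i ∈ Finset.range k, g (w i) + g a := by
  rw [Finset.sum_range_succ, update_self]
  congr 1
  refine Finset.sum_congr rfl fun i hi => ?_
  rw [update_of_ne (Finset.mem_range.1 hi).ne]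

-- At any position, the rest of the current descent word continues a shift of `w` up to its last
-- digit and is smaller there.
theorem blockConcat_update_mem_BetaShift (hw : w ∈ BetaShift w) {q : ℕ → ℕ × Fin 3}
    (hq : ∀ j, (q j).2 < w (q j).1) :
    blockConcat (fun j => update w (q j).1 (q j).2) (fun j => (q j).1) ∈ BetaShift w := by
  intro r
  set c := blockCursor (fun j => (q j).1) r with hc
  have hdigit : ∀ l, c.2 + l ≤ (q c.1).1 →
      (shift^[r] (blockConcat (fun j => update w (q j).1 (q j).2) fun j => (q j).1)) l =
        update w (q c.1).1 (q c.1).2 (c.2 + l) := fun l hl => by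
    rw [shift_iterate_apply, blockConcat, blockCursor_add hl]
  obtain ⟨d, hd⟩ := Nat.exists_eq_add_of_le (blockCursor_snd_le (fun j => (q j).1) r)
  rw [← hc] at hd
  refine (le_of_lt ?_ : toLex _ ≤ toLex (shift^[c.2] w)).trans (hw c.2)
  refine ⟨d, fun l hl => ?_, ?_⟩
  · change (shift^[r] _) l = (shift^[c.2] w) l
    rw [hdigit l (by lia), update_of_ne (by lia), shift_iterate_apply]
  · change (shift^[r] _) d < (shift^[c.2] w) d
    rw [hdigit d hd.ge, shift_iterate_apply, ← hd, update_self]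
    exact hq c.1

theorem exists_descent_inner_nonpos {N : ℕ} {x : Fin 3 → ℝ}
    (hx : x ∈ convexHull ℝ (descentFreq w '' descents w N)) (e : EuclideanSpace ℝ (Fin 3)) :
    ∃ q : descents w N, inner ℝ e (∑ l ∈ Finset.range (q.1.1 + 1),
      WithLp.toLp 2 (Pi.single (update w q.1.1 q.1.2 l) 1 - x)) ≤ 0 := by
  let f : (Fin 3 → ℝ) →ₗ[ℝ] ℝ :=
    innerₗ _ e ∘ₗ (WithLp.linearEquiv 2 ℝ (Fin 3 → ℝ)).symm.toLinearMap
  obtain ⟨_, ⟨q, hq, rfl⟩, hfq⟩ :=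
    (f.concaveOn convex_univ).exists_le_of_mem_convexHull (subset_univ _) hx
  refine ⟨⟨q, hq⟩, ?_⟩
  calc inner ℝ e (∑ l ∈ Finset.range (q.1 + 1),
        WithLp.toLp 2 (Pi.single (update w q.1 q.2 l) 1 - x))
      = ∑ l ∈ Finset.range (q.1 + 1), f (Pi.single (update w q.1 q.2 l) 1 - x) := inner_sum ..
    _ = (q.1 + 1 : ℕ) * (f (descentFreq w q) - f x) := by
        simp_rw [map_sub]
        exact sum_update_map_single_sub f w q (f x)
    _ ≤ 0 := mul_nonpos_of_nonneg_of_nonpos (Nat.cast_nonneg _) (sub_nonpos.2 hfq)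

theorem convexHull_descentFreq_subset_DF (hw : w ∈ BetaShift w) (N : ℕ) :
    convexHull ℝ (descentFreq w '' descents w N) ⊆ DF w := by
  intro x hx
  let g : Fin 3 → EuclideanSpace ℝ (Fin 3) := fun a => WithLp.toLp 2 (Pi.single a 1 - x)
  obtain ⟨q, hq⟩ := exists_blockConcat_sum_isLittleO (finite_range g).isBounded
    (fun q : descents w N => q.2.1) (exists_descent_inner_nonpos hx)
  exact ⟨_, blockConcat_update_mem_BetaShift hw fun j => (q j).2.2,
    hasFreq_of_sum_toLp_isLittleO hq⟩

end Descents

section UpperBound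

variable {w : Seq3} {m p : ℕ} {g : Fin 3 → ℝ}

-- Cut `s` after its first descent below `w`: what remains is again in `BetaShift w`.
theorem sum_range_le_of_mem_BetaShift {C : ℝ}
    (hC : ∀ r, ∑ i ∈ Finset.range r, g (w i) ≤ C)
    (hdescent : ∀ k, ∀ a < w k, ∑ i ∈ Finset.range k, g (w i) + g a ≤ 0) (r : ℕ) {s : Seq3}
    (hs : s ∈ BetaShift w) : ∑ i ∈ Finset.range r, g (s i) ≤ C := by
  induction r using Nat.strong_induction_on generalizing s with
  | _ r ih =>
    rcases hs 0 with rfl | ⟨k, hk, hlt⟩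
    · exact hC r
    have hprefix : ∀ n ≤ k, ∑ i ∈ Finset.range n, g (s i) = ∑ i ∈ Finset.range n, g (w i) :=
      fun n hn => Finset.sum_congr rfl fun i hi =>
        congrArg g (hk i ((Finset.mem_range.1 hi).trans_le hn))
    rcases le_or_gt r k with hr | hr
    · exact (hprefix r hr).trans_le (hC r)
    obtain ⟨b, rfl⟩ := Nat.exists_eq_add_of_le (Nat.succ_le_of_lt hr)
    have htail : ∑ i ∈ Finset.range b, g (s (k + 1 + i)) ≤ C := by
      simpa only [shift_iterate_apply] using
        ih b (by lia) (shift_iterate_mem_BetaShift hs (k + 1))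
    rw [Finset.sum_range_add, Finset.sum_range_succ, hprefix k le_rfl]
    linarith [hdescent k (s k) hlt]

theorem sum_range_add_nonpos_of_eventually_periodic (hp : 0 < p)
    (hper : ∀ r, m ≤ r → w (r + p) = w r)
    (hperiod : ∀ r, m ≤ r → ∑ i ∈ Finset.range (r + p), g (w i) ≤ ∑ i ∈ Finset.range r, g (w i))
    (hdescent : ∀ k < m + p, ∀ a < w k, ∑ i ∈ Finset.range k, g (w i) + g a ≤ 0) (k : ℕ) :
    ∀ a < w k, ∑ i ∈ Finset.range k, g (w i) + g a ≤ 0 := by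
  induction k using Nat.strong_induction_on with
  | _ k ih =>
    rcases lt_or_ge k (m + p) with hk | hk
    · exact hdescent k hk
    obtain ⟨r, rfl⟩ := Nat.exists_eq_add_of_le' (le_of_add_le_right hk)
    have hmr : m ≤ r := by lia
    intro a ha
    linarith [hperiod r hmr, ih r (by lia) a (hper r hmr ▸ ha)]

theorem DF_subset_convexHull (hp : 0 < p) (hper : ∀ r, m ≤ r → w (r + p) = w r) :
    DF w ⊆ convexHull ℝ (insert (periodFreq w m p) (descentFreq w '' descents w (m + p))) := by
  rintro x ⟨s, hs, hx⟩
  by_contra hx_notMem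
  have hclosed := (((finite_descents w (m + p)).image (descentFreq w)).insert
    (periodFreq w m p)).isClosed_convexHull ℝ
  obtain ⟨f, u, hf, hu⟩ :=
    geometric_hahn_banach_closed_point (convex_convexHull ℝ _) hclosed hx_notMem
  let g : Fin 3 → ℝ := fun a => f (Pi.single a 1) - u
  have hperiod : ∀ r, m ≤ r →
      ∑ i ∈ Finset.range (r + p), g (w i) ≤ ∑ i ∈ Finset.range r, g (w i) := fun r hr => by
    have hfp := hf _ (subset_convexHull ℝ _ (mem_insert _ _))
    rw [sum_range_add_of_eventually_periodic (fun i hi => by rw [hper i hi]) hr,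
      add_le_iff_nonpos_right]
    exact (sum_Ico_map_single_sub f.toLinearMap w m hp u).trans_le <|
      mul_nonpos_of_nonneg_of_nonpos (Nat.cast_nonneg _) (sub_nonpos.2 hfp.le)
  have hdescent : ∀ k < m + p, ∀ a < w k, ∑ i ∈ Finset.range k, g (w i) + g a ≤ 0 :=
    fun k hk a ha => by
    have hfq := hf _ (subset_convexHull ℝ _ (mem_insert_of_mem _
      (mem_image_of_mem _ (⟨hk, ha⟩ : (k, a) ∈ descents w (m + p)))))
    rw [← sum_range_update]
    exact (sum_update_map_single_sub f.toLinearMap w (k, a) u).trans_le <|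
      mul_nonpos_of_nonneg_of_nonpos (Nat.cast_nonneg _) (sub_nonpos.2 hfq.le)
  obtain ⟨C, hC⟩ :=
    bddAbove_range_of_add_le (D := fun r => ∑ i ∈ Finset.range r, g (w i)) hp hperiod
  have hfx : f x ≤ u := apply_le_of_hasFreq hx f fun n =>
    sum_range_le_of_mem_BetaShift (fun r => hC (mem_range_self r))
      (sum_range_add_nonpos_of_eventually_periodic hp hper hperiod hdescent) n hs
  exact hu.not_ge hfx

end UpperBound

section ExtremePoints

theorem extremePoints_subset_insert {𝕜 E : Type*} [Field 𝕜] [LinearOrder 𝕜]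
    [IsStrictOrderedRing 𝕜] [AddCommGroup E] [Module 𝕜 E] {K S : Set E} {a : E} (ha : a ∈ K)
    (hSK : convexHull 𝕜 S ⊆ K) (hKS : K ⊆ convexHull 𝕜 (insert a S)) :
    K.extremePoints 𝕜 ⊆ insert a S := by
  intro x hx
  rcases S.eq_empty_or_nonempty with rfl | hS
  · rw [insert_empty_eq, convexHull_singleton] at hKS
    exact mem_insert_iff.2 (.inl (hKS hx.1))
  have hxmem := hKS hx.1
  rw [convexHull_insert hS, convexJoin_singleton_left, mem_iUnion₂] at hxmem
  obtain ⟨y, hy, hxy⟩ := hxmem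
  rcases eq_or_ne x y with rfl | hne
  · exact mem_insert_of_mem _ <| extremePoints_convexHull_subset <|
      inter_extremePoints_subset_extremePoints_of_subset hSK ⟨hy, hx⟩
  · by_contra hx_notMem
    have hxa : x ≠ a := fun h => hx_notMem (h ▸ mem_insert x S)
    have hopen := mem_openSegment_of_ne_left_right hxa.symm hne.symm hxy
    exact hxa (hx.2 ha (hSK hy) hopen).symm

variable {w : Seq3}

theorem finite_extremePoints_DF_of_eventually_periodic {m p : ℕ} (hw : w ∈ BetaShift w)
    (hp : 0 < p) (hper : ∀ r, m ≤ r → w (r + p) = w r) : ((DF w).extremePoints ℝ).Finite :=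
  (((finite_descents w (m + p)).image (descentFreq w)).insert (periodFreq w m p)).subset <|
    extremePoints_subset_insert ⟨w, hw, hasFreq_periodFreq hp hper⟩
      (convexHull_descentFreq_subset_DF hw (m + p)) (DF_subset_convexHull hp hper)

theorem finite_extremePoints_DF_of_lt_of_subset {w' : Seq3} (hw : w ∈ BetaShift w)
    (hlt : toLex w' < toLex w) (hDF : DF w ⊆ DF w') : ((DF w).extremePoints ℝ).Finite := by
  obtain ⟨n, hn⟩ := exists_toLex_le_truncate hlt
  have hDF_eq : DF w = DF (truncate n w) :=
    (hDF.trans (DF_mono hn)).antisymm (DF_mono (Pi.toLex_monotone (truncate_le_self n w)))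
  rw [hDF_eq]
  refine finite_extremePoints_DF_of_eventually_periodic (m := n) (truncate_mem_BetaShift hw n)
    one_pos fun r hr => ?_
  rw [truncate_apply_of_le hr, truncate_apply_of_le (by lia)]

end ExtremePoints

/-- If the set of extreme points of `DF(w)` is infinite, then `w` is not
eventually periodic, and `DF` is injective at `w`. -/
theorem stmt10 (w : Seq3) (hw : w ∈ MaxSet)
    (hinf : (Set.extremePoints ℝ (DF w)).Infinite) :
    (¬ ∃ (m p : ℕ), 1 ≤ p ∧ ∀ r, m ≤ r → w (r + p) = w r) ∧
      ∀ w' ∈ MaxSet, DF w' = DF w → w' = w := by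
  refine ⟨fun ⟨m, p, hp, hper⟩ =>
    hinf (finite_extremePoints_DF_of_eventually_periodic hw.2 hp hper), fun w' hw' hDF => ?_⟩
  by_contra hne
  rcases lt_or_gt_of_ne (toLex.injective.ne hne) with hlt | hgt
  · exact hinf (finite_extremePoints_DF_of_lt_of_subset hw.2 hlt hDF.ge)
  · exact hinf (hDF ▸ finite_extremePoints_DF_of_lt_of_subset hw'.2 hgt hDF.le)
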